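/- Let q be a real number with 0 < q < 1. Then Ω₁·Ω₂ = q·φ(−q^{10})·ψ(−q) / (φ(−q)·ψ(q⁵)). -/

import Mathlib

/-- Ramanujan's theta function `f(a,b) = ∑_{n ∈ ℤ} a^(n(n+1)/2) b^(n(n-1)/2)`. -/
noncomputable def ramTheta (a b : ℂ) : ℂ :=
  ∑' n : ℤ, a ^ ((n * (n + 1)) / 2).toNat * b ^ ((n * (n - 1)) / 2).toNat

/-- `φ(q) = f(q,q)`. -/
noncomputable def phi (q : ℂ) : ℂ := ramTheta q q

/-- `ψ(q) = f(q,q³)`. -/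
noncomputable def psi (q : ℂ) : ℂ := ramTheta q (q ^ 3)

/-- `(a;q)_∞ = ∏_{k=0}^∞ (1 - a q^k)`. -/
noncomputable def qPochInf (a q : ℂ) : ℂ := ∏' k : ℕ, (1 - a * q ^ k)

noncomputable def Omega1 (q : ℝ) : ℂ :=
  ramTheta ((q : ℂ) ^ 4) ((q : ℂ) ^ 6) / ramTheta (-(q : ℂ)) (-(q : ℂ) ^ 9)

noncomputable def Omega2 (q : ℝ) : ℂ :=
  (q : ℂ) * ramTheta ((q : ℂ) ^ 2) ((q : ℂ) ^ 8) / ramTheta (-(q : ℂ) ^ 3) (-(q : ℂ) ^ 7)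

/-!
Put `χ(q) := (-q; q²)_∞`. The Jacobi triple product turns the numerator and the denominator of
`Ω₁ Ω₂` into products running over four of the five residue classes `j` in
`(x; p)_∞ = ∏_{j<5} (x p^j; p⁵)_∞`, with `x = -q²` and `x = q` respectively and `p = q²`.
Supplying the missing class, and using Euler's identity `(-q; q)_∞ χ(-q) = 1` in the numerator,
gives `Ω₁ Ω₂ = q χ(-q⁵) χ(-q¹⁰) / (χ(-q) χ(-q²))`. The right-hand side has the same value because
`φ(-q) = χ(-q) χ(-q²) ψ(-q)` and `φ(-q²) = χ(-q) χ(-q²) ψ(q)`.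

The triple product is the limit `M = N → ∞` of the finite identity
`∏_{k<M} (1 + a p^k) ∏_{k<N} (1 + b p^k) = ∑ₙ [M+N, N+n]_p a^{n(n+1)/2} b^{n(n-1)/2}`, `p = ab`,
which follows from Pascal's rule for `[n, k]_p` by adding the factors one at a time.
-/

section

open Filter Topology

variable {a b p q : ℂ}

lemma norm_pow_lt_one (hq : ‖q‖ < 1) {n : ℕ} (hn : n ≠ 0) : ‖q ^ n‖ < 1 := by
  simpa only [norm_pow] using pow_lt_one₀ (norm_nonneg q) hq hn

/-! ### Products `(a; p)_∞` -/

lemma summable_norm_neg_mul_pow (a : ℂ) (hp : ‖p‖ < 1) : Summable fun k : ℕ => ‖-(a * p ^ k)‖ := by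
  simpa only [norm_neg, norm_mul, norm_pow] using
    (summable_geometric_of_lt_one (norm_nonneg p) hp).mul_left ‖a‖

lemma multipliable_one_sub_mul_pow (a : ℂ) (hp : ‖p‖ < 1) :
    Multipliable fun k : ℕ => 1 - a * p ^ k := by
  simpa only [sub_eq_add_neg] using
    multipliable_one_add_of_summable (summable_norm_neg_mul_pow a hp)

lemma one_sub_mul_pow_ne_zero (ha : ‖a‖ < 1) (hp : ‖p‖ < 1) (k : ℕ) : 1 - a * p ^ k ≠ 0 := by
  have h : ‖a * p ^ k‖ < 1 := by
    rw [norm_mul, norm_pow]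
    exact mul_lt_one_of_nonneg_of_lt_one_left (norm_nonneg a) ha
      (pow_le_one₀ (norm_nonneg p) hp.le)
  exact sub_ne_zero.mpr fun h' => by simp [← h'] at h

lemma qPochInf_ne_zero (ha : ‖a‖ < 1) (hp : ‖p‖ < 1) : qPochInf a p ≠ 0 := by
  simpa only [qPochInf, sub_eq_add_neg] using
    tprod_one_add_ne_zero_of_summable (f := fun k : ℕ => -(a * p ^ k))
      (fun k => by simpa only [sub_eq_add_neg] using one_sub_mul_pow_ne_zero ha hp k)
      (summable_norm_neg_mul_pow a hp)

lemma qPochInf_mul_qPochInf_neg (a : ℂ) (hp : ‖p‖ < 1) :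
    qPochInf a p * qPochInf (-a) p = qPochInf (a ^ 2) (p ^ 2) := by
  rw [qPochInf, qPochInf, ← (multipliable_one_sub_mul_pow a hp).tprod_mul
    (multipliable_one_sub_mul_pow (-a) hp)]
  exact tprod_congr fun k => by ring

lemma qPochInf_eq_prod_range (a : ℂ) (hp : ‖p‖ < 1) {m : ℕ} (hm : m ≠ 0) :
    qPochInf a p = ∏ j ∈ Finset.range m, qPochInf (a * p ^ j) (p ^ m) := by
  have : NeZero m := ⟨hm⟩
  have hmul : Multipliable fun kj : ℕ × Fin m => 1 - a * p ^ (kj.1 * m + kj.2 : ℕ) :=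
    (Nat.divModEquiv m).symm.multipliable_iff.mpr (multipliable_one_sub_mul_pow a hp)
  calc
    qPochInf a p = ∏' kj : ℕ × Fin m, (1 - a * p ^ (kj.1 * m + kj.2 : ℕ)) :=
      ((Nat.divModEquiv m).symm.tprod_eq fun k => 1 - a * p ^ k).symm
    _ = ∏' k : ℕ, ∏ j : Fin m, (1 - a * p ^ (j : ℕ) * (p ^ m) ^ k) := by
      rw [hmul.tprod_prod' fun k => (hasProd_fintype _).multipliable]
      refine tprod_congr fun k => (tprod_fintype _).trans (Finset.prod_congr rfl fun j _ => ?_)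
      rw [add_comm, pow_add, pow_mul', mul_assoc]
    _ = ∏ j : Fin m, qPochInf (a * p ^ (j : ℕ)) (p ^ m) :=
      Multipliable.tprod_finsetProd fun j _ =>
        multipliable_one_sub_mul_pow _ (norm_pow_lt_one hp hm)
    _ = _ := Fin.prod_univ_eq_prod_range (fun j => qPochInf (a * p ^ j) (p ^ m)) m

/-- The finite product `(a; p)_n = ∏_{k<n} (1 - a p^k)`, whose limit is `qPochInf a p`. -/
noncomputable def qPoch (a p : ℂ) (n : ℕ) : ℂ := ∏ k ∈ Finset.range n, (1 - a * p ^ k)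

lemma qPoch_zero (a p : ℂ) : qPoch a p 0 = 1 := Finset.prod_range_zero _

lemma qPoch_succ (a p : ℂ) (n : ℕ) : qPoch a p (n + 1) = qPoch a p n * (1 - a * p ^ n) :=
  Finset.prod_range_succ _ n

lemma tendsto_qPoch (a : ℂ) (hp : ‖p‖ < 1) : Tendsto (qPoch a p) atTop (𝓝 (qPochInf a p)) :=
  (multipliable_one_sub_mul_pow a hp).hasProd.tendsto_prod_nat

/-! ### Gaussian binomial coefficients -/

/-- The reciprocal `1 / (p; p)_m`, extended by `0` to negative `m`, so that the Gaussian binomial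
coefficients satisfy Pascal's rule without boundary cases. -/
noncomputable def invQPoch (p : ℂ) : ℤ → ℂ
  | .ofNat m => (qPoch p p m)⁻¹
  | .negSucc _ => 0

/-- The Gaussian binomial coefficient `[n, k]_p`, zero unless `0 ≤ k ≤ n`. It is written as a
quotient of products, hence meaningful only when `p` is not a root of unity. -/
noncomputable def qBinom (p : ℂ) (n : ℕ) (k : ℤ) : ℂ :=
  qPoch p p n * invQPoch p k * invQPoch p (n - k)

lemma invQPoch_natCast (p : ℂ) (m : ℕ) : invQPoch p m = (qPoch p p m)⁻¹ := rfl

lemma invQPoch_of_neg (p : ℂ) {m : ℤ} (hm : m < 0) : invQPoch p m = 0 := by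
  obtain ⟨n, rfl⟩ := Int.eq_negSucc_of_lt_zero hm
  rfl

lemma invQPoch_sub_one (hp : ‖p‖ < 1) (m : ℤ) :
    invQPoch p (m - 1) = (1 - p ^ m.toNat) * invQPoch p m := by
  rcases lt_or_ge m 0 with hm | hm
  · rw [invQPoch_of_neg p hm, invQPoch_of_neg p (by lia), mul_zero]
  lift m to ℕ using hm
  cases m with
  | zero => simp [invQPoch_of_neg]
  | succ m =>
    have h := one_sub_mul_pow_ne_zero hp hp m
    rw [show ((m + 1 : ℕ) : ℤ) - 1 = m by lia, Int.toNat_natCast, invQPoch_natCast,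
      invQPoch_natCast, qPoch_succ, mul_inv, pow_succ']
    field_simp

lemma qBinom_symm (p : ℂ) (n : ℕ) (k : ℤ) : qBinom p n (n - k) = qBinom p n k := by
  rw [qBinom, qBinom, sub_sub_cancel, mul_right_comm]

lemma qBinom_zero_zero (p : ℂ) : qBinom p 0 0 = 1 := by
  have h : invQPoch p 0 = 1 := by rw [← Nat.cast_zero, invQPoch_natCast, qPoch_zero, inv_one]
  rw [qBinom, Nat.cast_zero, sub_zero, h, qPoch_zero, mul_one, mul_one]

lemma qBinom_of_neg (p : ℂ) (n : ℕ) {k : ℤ} (hk : k < 0) : qBinom p n k = 0 := by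
  rw [qBinom, invQPoch_of_neg p hk, mul_zero, zero_mul]

lemma qBinom_of_lt (p : ℂ) {n : ℕ} {k : ℤ} (hk : n < k) : qBinom p n k = 0 := by
  rw [← qBinom_symm, qBinom_of_neg p n (by lia)]

lemma qBinom_succ (hp : ‖p‖ < 1) (n : ℕ) (k : ℤ) :
    qBinom p (n + 1) k = qBinom p n k + p ^ (n + 1 - k).toNat * qBinom p n (k - 1) := by
  rcases lt_or_ge k 0 with hk | hk
  · simp only [qBinom_of_neg p _ hk, qBinom_of_neg p n (show k - 1 < 0 by lia), mul_zero, add_zero]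
  rcases lt_or_ge (n + 1 : ℤ) k with hnk | hnk
  · rw [qBinom_of_lt p (by lia), qBinom_of_lt p (by lia), qBinom_of_lt p (by lia), mul_zero,
      add_zero]
  have hpow : p ^ (n + 1 - k).toNat * p ^ k.toNat = p * p ^ n := by
    rw [← pow_add, ← pow_succ']
    congr 1
    lia
  have hleft := invQPoch_sub_one hp (n + 1 - k)
  rw [show (n + 1 - k - 1 : ℤ) = n - k by ring] at hleft
  rw [qBinom, qBinom, qBinom, qPoch_succ, Nat.cast_succ, show n - (k - 1) = n + 1 - k by ring,
    hleft, invQPoch_sub_one hp k]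
  linear_combination qPoch p p n * invQPoch p k * invQPoch p (n + 1 - k) * hpow

lemma tendsto_invQPoch (hp : ‖p‖ < 1) :
    Tendsto (invQPoch p) atTop (𝓝 (qPochInf p p)⁻¹) := by
  rw [← Nat.map_cast_int_atTop, tendsto_map'_iff]
  exact (tendsto_qPoch p hp).inv₀ (qPochInf_ne_zero hp hp)

lemma exists_norm_qBinom_le (hp : ‖p‖ < 1) : ∃ C, ∀ n k, ‖qBinom p n k‖ ≤ C := by
  have hlim := tendsto_qPoch p hp
  obtain ⟨A, hA⟩ := hlim.norm.bddAbove_range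
  obtain ⟨B, hB⟩ := (hlim.inv₀ (qPochInf_ne_zero hp hp)).norm.bddAbove_range
  have hqPoch (n : ℕ) : ‖qPoch p p n‖ ≤ A := hA ⟨n, rfl⟩
  have hinv_nat (n : ℕ) : ‖(qPoch p p n)⁻¹‖ ≤ B := hB ⟨n, rfl⟩
  have hA0 : 0 ≤ A := (norm_nonneg _).trans (hqPoch 0)
  have hB0 : 0 ≤ B := (norm_nonneg _).trans (hinv_nat 0)
  have hinv : ∀ m : ℤ, ‖invQPoch p m‖ ≤ B
    | .ofNat m => hinv_nat m
    | .negSucc _ => by simpa only [invQPoch, norm_zero] using hB0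
  refine ⟨A * B * B, fun n k => ?_⟩
  rw [qBinom, norm_mul, norm_mul]
  gcongr
  exacts [hqPoch n, hinv k, hinv _]

lemma tendsto_qBinom_add_self (hp : ‖p‖ < 1) (n : ℤ) :
    Tendsto (fun N : ℕ => qBinom p (N + N) (N + n)) atTop (𝓝 (qPochInf p p)⁻¹) := by
  have hqPoch : Tendsto (fun N : ℕ => qPoch p p (N + N)) atTop (𝓝 (qPochInf p p)) :=
    (tendsto_qPoch p hp).comp (tendsto_atTop_mono (fun N => Nat.le_add_left N N) tendsto_id)
  have hinv (m : ℤ) : Tendsto (fun N : ℕ => invQPoch p (N + m)) atTop (𝓝 (qPochInf p p)⁻¹) :=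
    (tendsto_invQPoch hp).comp
      (tendsto_atTop_add_const_right _ m tendsto_natCast_atTop_atTop)
  have h := (hqPoch.mul (hinv n)).mul (hinv (-n))
  rw [mul_inv_cancel₀ (qPochInf_ne_zero hp hp), one_mul] at h
  refine h.congr fun N => ?_
  rw [qBinom, Nat.cast_add, add_sub_add_left_eq_sub, sub_eq_add_neg]

/-! ### The Jacobi triple product -/

/-- The `n`-th term of the series defining `ramTheta a b`. -/
noncomputable def ramThetaTerm (a b : ℂ) (n : ℤ) : ℂ :=
  a ^ ((n * (n + 1)) / 2).toNat * b ^ ((n * (n - 1)) / 2).toNat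

lemma ramThetaTerm_zero (a b : ℂ) : ramThetaTerm a b 0 = 1 := by
  simp [ramThetaTerm]

lemma ramThetaTerm_neg (a b : ℂ) (n : ℤ) : ramThetaTerm a b (-n) = ramThetaTerm b a n := by
  rw [ramThetaTerm, ramThetaTerm, mul_comm, show -n * (-n - 1) = n * (n + 1) by ring,
    show -n * (-n + 1) = n * (n - 1) by ring]

lemma mul_add_one_ediv_two_nonneg (n : ℤ) : 0 ≤ n * (n + 1) / 2 := by
  refine Int.ediv_nonneg ?_ zero_le_two
  rcases le_or_gt 0 n with hn | hn
  · positivity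
  · exact mul_nonneg_of_nonpos_of_nonpos hn.le hn

lemma ramThetaTerm_add_one_mul_pow (a b : ℂ) {n : ℤ} {m : ℕ} (h : n ≤ m) :
    ramThetaTerm a b (n + 1) * (a * b) ^ (m - n).toNat
      = ramThetaTerm a b n * (a * (a * b) ^ m) := by
  have h0 := mul_add_one_ediv_two_nonneg n
  have hsucc : (n + 1) * (n + 1 + 1) / 2 = n * (n + 1) / 2 + (n + 1) := by
    rw [← Int.add_mul_ediv_right _ _ two_ne_zero]
    ring_nf
  have hpred : n * (n - 1) / 2 = n * (n + 1) / 2 - n := by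
    rw [sub_eq_add_neg _ n, ← Int.add_mul_ediv_right _ _ two_ne_zero]
    ring_nf
  have hsucc0 := mul_add_one_ediv_two_nonneg (n + 1)
  have hpred0 := mul_add_one_ediv_two_nonneg (n - 1)
  rw [sub_add_cancel, mul_comm] at hpred0
  rw [ramThetaTerm, ramThetaTerm, add_sub_cancel_right, mul_comm (n + 1) n, hsucc, hpred]
  rw [hsucc] at hsucc0
  rw [hpred] at hpred0
  generalize n * (n + 1) / 2 = u at *
  have ha : (u + (n + 1)).toNat + (m - n).toNat = u.toNat + 1 + m := by lia
  have hb : u.toNat + (m - n).toNat = (u - n).toNat + m := by lia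
  calc
    _ = a ^ ((u + (n + 1)).toNat + (m - n).toNat) * b ^ (u.toNat + (m - n).toNat) := by ring
    _ = a ^ (u.toNat + 1 + m) * b ^ ((u - n).toNat + m) := by rw [ha, hb]
    _ = _ := by ring

lemma summable_norm_ramThetaTerm_natCast (h : ‖a * b‖ < 1) :
    Summable fun n : ℕ => ‖ramThetaTerm a b n‖ := by
  have hratio : Tendsto (fun n : ℕ => ‖a * (a * b) ^ n‖) atTop (𝓝 0) := by
    simpa using ((tendsto_pow_atTop_nhds_zero_of_norm_lt_one h).const_mul a).norm
  refine summable_of_ratio_norm_eventually_le (r := 1 / 2) (by norm_num) ?_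
  filter_upwards [hratio.eventually_le_const (by norm_num : (0 : ℝ) < 1 / 2)] with n hn
  have hterm := ramThetaTerm_add_one_mul_pow a b (le_refl (n : ℤ))
  rw [sub_self, Int.toNat_zero, pow_zero, mul_one] at hterm
  rw [norm_norm, norm_norm, Nat.cast_succ, hterm, norm_mul, mul_comm]
  gcongr

lemma summable_norm_ramThetaTerm (h : ‖a * b‖ < 1) : Summable fun n => ‖ramThetaTerm a b n‖ := by
  refine .of_nat_of_neg (summable_norm_ramThetaTerm_natCast h) ?_
  simp only [ramThetaTerm_neg]
  exact summable_norm_ramThetaTerm_natCast (mul_comm a b ▸ h)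

lemma hasSum_qBinom_mul_ramThetaTerm_zero (a b : ℂ) :
    HasSum (fun n => qBinom (a * b) 0 n * ramThetaTerm a b n) 1 := by
  convert! hasSum_single (f := fun n => qBinom (a * b) 0 n * ramThetaTerm a b n) 0 fun n hn => ?_
  · rw [qBinom_zero_zero, ramThetaTerm_zero, one_mul]
  · rcases hn.lt_or_gt with hn | hn
    · rw [qBinom_of_neg _ _ hn, zero_mul]
    · rw [qBinom_of_lt _ (by simpa using hn), zero_mul]

lemma hasSum_qBinom_mul_ramThetaTerm_succ (h : ‖a * b‖ < 1) {M N : ℕ} {s : ℂ}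
    (hs : HasSum (fun n : ℤ => qBinom (a * b) (M + N) (N + n) * ramThetaTerm a b n) s) :
    HasSum (fun n : ℤ => qBinom (a * b) (M + 1 + N) (N + n) * ramThetaTerm a b n)
      (s * (1 + a * (a * b) ^ M)) := by
  have hshift := (Equiv.subRight (1 : ℤ)).hasSum_iff.mpr (hs.mul_right (a * (a * b) ^ M))
  rw [mul_one_add]
  refine (hs.add hshift).congr_fun fun n => ?_
  simp only [Function.comp_apply, Equiv.subRight_apply]
  rw [Nat.add_right_comm, qBinom_succ h, ← add_sub_assoc,
    show ((M + N : ℕ) : ℤ) + 1 - (N + n) = M - (n - 1) by push_cast; ring]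
  rcases le_or_gt (n - 1) M with hn | hn
  · have hterm := ramThetaTerm_add_one_mul_pow a b hn
    rw [sub_add_cancel] at hterm
    linear_combination qBinom (a * b) (M + N) (N + n - 1) * hterm
  · rw [qBinom_of_lt _ (show ((M + N : ℕ) : ℤ) < N + n - 1 by lia)]
    ring

lemma hasSum_qBinom_mul_ramThetaTerm_swap {M N : ℕ} {s : ℂ}
    (hs : HasSum (fun n : ℤ => qBinom p (M + N) (N + n) * ramThetaTerm a b n) s) :
    HasSum (fun n : ℤ => qBinom p (N + M) (M + n) * ramThetaTerm b a n) s := by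
  refine ((Equiv.neg ℤ).hasSum_iff.mpr hs).congr_fun fun n => ?_
  rw [Function.comp_apply, Equiv.neg_apply, ramThetaTerm_neg, ← qBinom_symm, add_comm N,
    show ((M + N : ℕ) : ℤ) - (M + n) = N + -n by push_cast; ring]

lemma hasSum_qBinom_mul_ramThetaTerm_zero_right (h : ‖a * b‖ < 1) (M : ℕ) :
    HasSum (fun n => qBinom (a * b) M n * ramThetaTerm a b n) (qPoch (-a) (a * b) M) := by
  induction M with
  | zero => simpa only [qPoch_zero] using hasSum_qBinom_mul_ramThetaTerm_zero a b
  | succ M ih =>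
    rw [qPoch_succ, neg_mul, sub_neg_eq_add]
    simpa only [Nat.cast_zero, zero_add, add_zero] using
      hasSum_qBinom_mul_ramThetaTerm_succ (N := 0) h
        (by simpa only [Nat.cast_zero, zero_add, add_zero] using ih)

theorem hasSum_qBinom_mul_ramThetaTerm (h : ‖a * b‖ < 1) (M N : ℕ) :
    HasSum (fun n : ℤ => qBinom (a * b) (M + N) (N + n) * ramThetaTerm a b n)
      (qPoch (-a) (a * b) M * qPoch (-b) (a * b) N) := by
  induction M with
  | zero =>
    have hba := hasSum_qBinom_mul_ramThetaTerm_zero_right (mul_comm a b ▸ h) N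
    rw [mul_comm b a] at hba
    rw [qPoch_zero, one_mul]
    exact hasSum_qBinom_mul_ramThetaTerm_swap (N := 0)
      (by simpa only [Nat.cast_zero, zero_add, add_zero] using hba)
  | succ M ih =>
    rw [qPoch_succ, neg_mul, sub_neg_eq_add, mul_right_comm]
    exact hasSum_qBinom_mul_ramThetaTerm_succ h ih

theorem ramTheta_eq_qPochInf (hab : a * b = p) (hp : ‖p‖ < 1) :
    ramTheta a b = qPochInf (-a) p * qPochInf (-b) p * qPochInf p p := by
  subst hab
  obtain ⟨C, hC⟩ := exists_norm_qBinom_le hp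
  have hsum : Tendsto
      (fun N : ℕ => ∑' n : ℤ, qBinom (a * b) (N + N) (N + n) * ramThetaTerm a b n) atTop
      (𝓝 (∑' n, (qPochInf (a * b) (a * b))⁻¹ * ramThetaTerm a b n)) := by
    refine tendsto_tsum_of_dominated_convergence ((summable_norm_ramThetaTerm hp).mul_left C)
      (fun n => (tendsto_qBinom_add_self hp n).mul_const _) (.of_forall fun N n => ?_)
    rw [norm_mul]
    gcongr
    exact hC _ _
  have hprod := (tendsto_qPoch (-a) hp).mul (tendsto_qPoch (-b) hp)
  have hlim := tendsto_nhds_unique hsum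
    (hprod.congr fun N => (hasSum_qBinom_mul_ramThetaTerm hp N N).tsum_eq.symm)
  rw [tsum_mul_left] at hlim
  exact (div_eq_iff (qPochInf_ne_zero hp hp)).mp ((div_eq_inv_mul _ _).trans hlim)

lemma ramTheta_ne_zero (ha : ‖a‖ < 1) (hb : ‖b‖ < 1) : ramTheta a b ≠ 0 := by
  have hab : ‖a * b‖ < 1 := by
    rw [norm_mul]
    exact mul_lt_one_of_nonneg_of_lt_one_left (norm_nonneg a) ha hb.le
  rw [ramTheta_eq_qPochInf rfl hab]
  exact mul_ne_zero (mul_ne_zero (qPochInf_ne_zero (by rwa [norm_neg]) hab)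
    (qPochInf_ne_zero (by rwa [norm_neg]) hab)) (qPochInf_ne_zero hab hab)

lemma psi_ne_zero (hq : ‖q‖ < 1) : psi q ≠ 0 :=
  ramTheta_ne_zero hq (norm_pow_lt_one hq three_ne_zero)

/-! ### Ramanujan's function `χ` -/

/-- Ramanujan's function `χ(q) = (-q; q²)_∞`, in terms of which `φ`, `ψ` and the products of theta
functions in `Omega1 q * Omega2 q` are expressed. -/
noncomputable def chi (q : ℂ) : ℂ := qPochInf (-q) (q ^ 2)

lemma chi_ne_zero (hq : ‖q‖ < 1) : chi q ≠ 0 :=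
  qPochInf_ne_zero (by rwa [norm_neg]) (norm_pow_lt_one hq two_ne_zero)

lemma chi_mul_chi_neg (hq : ‖q‖ < 1) : chi q * chi (-q) = chi (-q ^ 2) := by
  rw [chi, chi, chi, neg_sq, neg_sq, qPochInf_mul_qPochInf_neg _ (norm_pow_lt_one hq two_ne_zero),
    neg_neg, neg_sq]

lemma qPochInf_self_eq_chi_neg_mul (hq : ‖q‖ < 1) :
    qPochInf q q = chi (-q) * qPochInf (q ^ 2) (q ^ 2) := by
  rw [qPochInf_eq_prod_range q hq two_ne_zero, Finset.prod_range_succ, Finset.prod_range_one,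
    chi, pow_zero, mul_one, pow_one, neg_neg, neg_sq, ← sq]

lemma qPochInf_neg_self_mul_chi_neg (hq : ‖q‖ < 1) : qPochInf (-q) q * chi (-q) = 1 := by
  have hq2 := norm_pow_lt_one hq two_ne_zero
  refine mul_right_cancel₀ (qPochInf_ne_zero hq2 hq2) ?_
  rw [mul_assoc, ← qPochInf_self_eq_chi_neg_mul hq, mul_comm, qPochInf_mul_qPochInf_neg q hq,
    one_mul]

lemma phi_eq_chi_sq_mul (hq : ‖q‖ < 1) : phi q = chi q ^ 2 * qPochInf (q ^ 2) (q ^ 2) := by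
  have hq2 := norm_pow_lt_one hq two_ne_zero
  rw [phi, ramTheta_eq_qPochInf (sq q).symm hq2, chi, sq (qPochInf _ _)]

lemma psi_eq_chi_mul (hq : ‖q‖ < 1) : psi q = chi q * qPochInf (q ^ 4) (q ^ 4) := by
  rw [psi, ramTheta_eq_qPochInf (pow_succ' q 3).symm (norm_pow_lt_one hq four_ne_zero), chi,
    qPochInf_eq_prod_range (-q) (norm_pow_lt_one hq two_ne_zero) two_ne_zero,
    Finset.prod_range_succ, Finset.prod_range_one]
  ring_nf

lemma phi_eq_chi_mul_chi_mul_psi (hq : ‖q‖ < 1) : phi q = chi q * chi (-q ^ 2) * psi q := by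
  rw [phi_eq_chi_sq_mul hq, psi_eq_chi_mul hq,
    qPochInf_self_eq_chi_neg_mul (norm_pow_lt_one hq two_ne_zero)]
  ring_nf

lemma phi_neg_sq_eq_chi_mul_chi_mul_psi (hq : ‖q‖ < 1) :
    phi (-q ^ 2) = chi (-q) * chi (-q ^ 2) * psi q := by
  have hq2 : ‖-q ^ 2‖ < 1 := by simpa only [norm_neg] using norm_pow_lt_one hq two_ne_zero
  have hpow : (-q ^ 2) ^ 2 = q ^ 4 := by ring
  rw [phi_eq_chi_sq_mul hq2, psi_eq_chi_mul hq, hpow]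
  linear_combination -chi (-q ^ 2) * qPochInf (q ^ 4) (q ^ 4) * chi_mul_chi_neg hq

/-! ### Products of theta functions of level five -/

lemma ramTheta_one_nine_mul_three_seven (hq : ‖q‖ < 1) :
    ramTheta q (q ^ 9) * ramTheta (q ^ 3) (q ^ 7) * chi (q ^ 5)
      = chi q * qPochInf (q ^ 10) (q ^ 10) ^ 2 := by
  have hq10 : ‖q ^ 10‖ < 1 := norm_pow_lt_one hq (by norm_num)
  rw [ramTheta_eq_qPochInf (by ring) hq10, ramTheta_eq_qPochInf (by ring) hq10, chi, chi,
    qPochInf_eq_prod_range (-q) (norm_pow_lt_one hq two_ne_zero) (by norm_num : 5 ≠ 0)]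
  simp only [Finset.prod_range_succ, Finset.prod_range_zero]
  ring_nf

lemma ramTheta_one_four_mul_two_three (hq : ‖q‖ < 1) :
    ramTheta q (q ^ 4) * ramTheta (q ^ 2) (q ^ 3) * chi (-q)
      = chi (-q ^ 5) * qPochInf (q ^ 5) (q ^ 5) ^ 2 := by
  have hq5 : ‖q ^ 5‖ < 1 := norm_pow_lt_one hq (by norm_num)
  have hsplit : qPochInf (-q) q = qPochInf (-q) (q ^ 5) * qPochInf (-q ^ 2) (q ^ 5)
      * qPochInf (-q ^ 3) (q ^ 5) * qPochInf (-q ^ 4) (q ^ 5) * qPochInf (-q ^ 5) (q ^ 5) := by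
    rw [qPochInf_eq_prod_range (-q) hq (by norm_num : 5 ≠ 0)]
    simp only [Finset.prod_range_succ, Finset.prod_range_zero]
    ring_nf
  have hchi := qPochInf_neg_self_mul_chi_neg hq
  have hchi5 := qPochInf_neg_self_mul_chi_neg hq5
  rw [hsplit] at hchi
  rw [ramTheta_eq_qPochInf (by ring) hq5, ramTheta_eq_qPochInf (by ring) hq5]
  generalize qPochInf (-q ^ 5) (q ^ 5) = y at hchi hchi5
  linear_combination qPochInf (q ^ 5) (q ^ 5) ^ 2 * (chi (-q ^ 5) * hchi
    - qPochInf (-q) (q ^ 5) * qPochInf (-q ^ 2) (q ^ 5) * qPochInf (-q ^ 3) (q ^ 5)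
      * qPochInf (-q ^ 4) (q ^ 5) * chi (-q) * hchi5)

theorem ramTheta_div_mul_div_eq_chi (hq : ‖q‖ < 1) :
    ramTheta (q ^ 4) (q ^ 6) / ramTheta (-q) (-q ^ 9)
        * (ramTheta (q ^ 2) (q ^ 8) / ramTheta (-q ^ 3) (-q ^ 7))
      = chi (-q ^ 5) * chi (-q ^ 10) / (chi (-q) * chi (-q ^ 2)) := by
  have hneg {n : ℕ} (hn : n ≠ 0) : ‖-q ^ n‖ < 1 := by
    simpa only [norm_neg] using norm_pow_lt_one hq hn
  have hq' : ‖-q‖ < 1 := by rwa [norm_neg]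
  have hnum : ramTheta (q ^ 2) (q ^ 8) * ramTheta (q ^ 4) (q ^ 6) * chi (-q ^ 2)
      = chi (-q ^ 10) * qPochInf (q ^ 10) (q ^ 10) ^ 2 := by
    simpa only [← pow_mul] using
      ramTheta_one_four_mul_two_three (norm_pow_lt_one hq two_ne_zero)
  have hden : ramTheta (-q) (-q ^ 9) * ramTheta (-q ^ 3) (-q ^ 7) * chi (-q ^ 5)
      = chi (-q) * qPochInf (q ^ 10) (q ^ 10) ^ 2 := by
    simpa [Odd.neg_pow, Even.neg_pow, Nat.odd_iff, Nat.even_iff] using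
      ramTheta_one_nine_mul_three_seven hq'
  have h19 : ramTheta (-q) (-q ^ 9) ≠ 0 := ramTheta_ne_zero hq' (hneg (by norm_num))
  have h37 : ramTheta (-q ^ 3) (-q ^ 7) ≠ 0 :=
    ramTheta_ne_zero (hneg three_ne_zero) (hneg (by norm_num))
  have hchi := chi_ne_zero hq'
  have hchi2 := chi_ne_zero (hneg two_ne_zero)
  field_simp
  linear_combination chi (-q) * hnum - chi (-q ^ 10) * hden

end

theorem stmt11_general (q : ℂ) (hq : ‖q‖ < 1) :
    ramTheta (q ^ 4) (q ^ 6) / ramTheta (-q) (-q ^ 9)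
        * (q * ramTheta (q ^ 2) (q ^ 8) / ramTheta (-q ^ 3) (-q ^ 7))
      = q * phi (-q ^ 10) * psi (-q) / (phi (-q) * psi (q ^ 5)) := by
  have hneg : ‖-q‖ < 1 := by rwa [norm_neg]
  have hq5 : ‖q ^ 5‖ < 1 := norm_pow_lt_one hq (by norm_num)
  have hphi : phi (-q) = chi (-q) * chi (-q ^ 2) * psi (-q) := by
    simpa only [neg_sq] using phi_eq_chi_mul_chi_mul_psi hneg
  have hphi10 : phi (-q ^ 10) = chi (-q ^ 5) * chi (-q ^ 10) * psi (q ^ 5) := by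
    simpa only [← pow_mul] using phi_neg_sq_eq_chi_mul_chi_mul_psi hq5
  have hpsi : psi (-q) ≠ 0 := psi_ne_zero hneg
  have hpsi5 : psi (q ^ 5) ≠ 0 := psi_ne_zero hq5
  rw [mul_div_assoc q, mul_left_comm, ramTheta_div_mul_div_eq_chi hq, hphi, hphi10]
  field_simp

theorem stmt11 (q : ℝ) (hq0 : 0 < q) (hq1 : q < 1) :
    Omega1 q * Omega2 q
      = (q : ℂ) * phi (-(q : ℂ) ^ 10) * psi (-(q : ℂ))
        / (phi (-(q : ℂ)) * psi ((q : ℂ) ^ 5)) := by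
  have hq : ‖(q : ℂ)‖ < 1 := by rwa [Complex.norm_of_nonneg hq0.le]
  exact stmt11_general q hq
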